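/- Let q ∈ ℂ with 0 < |q| < 1 and let x, z ∈ ℂ with z ≠ 0 and z ≠ q^{-m} for every m ∈ ℕ (so that (z;q)_n ≠ 0 for all n). Assume the series ∑_{n≥0} (-x/z;q)_n q^{n(n-1)/2} z^n / ((q;q)_n (z;q)_n) converges absolutely and the family (j,k) ↦ q^{j^2 + 2jk + 2k^2 - j - k} x^j z^{2k} / ((q;q)_j (q^2;q^2)_k) indexed by ℕ×ℕ is absolutely summable. Then (z;q)_∞ · ∑_{n≥0} (-x/z;q)_n q^{n(n-1)/2} z^n / ((q;q)_n (z;q)_n) = ∑_{j,k≥0} q^{j^2 + 2jk + 2k^2 - j - k} x^j z^{2k} / ((q;q)_j (q^2;q^2)_k). -/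

import Mathlib

/-- The finite q-shifted factorial with base `Q`: `(a;Q)_n = ∏_{k=0}^{n-1} (1 - a Q^k)`. -/
noncomputable def qPoch (a q : ℂ) (n : ℕ) : ℂ := ∏ k ∈ Finset.range n, (1 - a * q ^ k)

/-- The infinite q-shifted factorial `(a;Q)_∞ = ∏_{k=0}^{∞} (1 - a Q^k)`. -/
noncomputable def qPochInf (a q : ℂ) : ℂ := ∏' k : ℕ, (1 - a * q ^ k)

/-!
Euler's identity `(-w;q)_∞ = ∑ q^(n choose 2) w^n / (q;q)_n` and the finite `q`-binomial theorem
expand `(z;q)_∞ / (z;q)_n = (z q^n;q)_∞` and `z^n (-x/z;q)_n = ∏_{k<n} (z + x q^k)`, turning the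
left-hand side into an absolutely convergent triple series with general term
`q^((j choose 2) + (j+a+b choose 2)) x^j z^a (-z)^b / ((q;q)_j (q;q)_a (q;q)_b)`. Its exponent
depends on `a` and `b` only through `N = a + b`, so summing over `a + b = N` first leaves
`∑ z^a (-z)^b / ((q;q)_a (q;q)_b)`. By Gauss, this vanishes for odd `N` and equals
`z^(2k) / (q²;q²)_k` for `N = 2k`.
-/

open Finset Filter Topology

lemma choose_two_add (a b : ℕ) : (a + b).choose 2 = a.choose 2 + b.choose 2 + a * b := by
  simp only [Nat.add_choose_eq, Nat.sum_antidiagonal_succ, Nat.choose_zero_right,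
    Nat.choose_one_right, zero_add, HasAntidiagonal.antidiagonal_zero, sum_singleton]
  ring

lemma choose_two_succ (n : ℕ) : (n + 1).choose 2 = n.choose 2 + n := by
  simp [choose_two_add]

lemma cast_choose_two_add_choose_two (j k : ℕ) :
    ((j.choose 2 + (j + 2 * k).choose 2 : ℕ) : ℤ) =
      (j : ℤ) ^ 2 + 2 * (j : ℤ) * (k : ℤ) + 2 * (k : ℤ) ^ 2 - (j : ℤ) - (k : ℤ) := by
  rw [← Int.cast_inj (α := ℚ)]
  push_cast [Nat.cast_choose_two]
  ring

lemma hasSum_sum_antidiagonal {α A : Type*} [AddCommMonoid α] [TopologicalSpace α]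
    [ContinuousAdd α] [RegularSpace α] [AddMonoid A] [HasAntidiagonal A]
    {f : A × A → α} {a : α} (hf : HasSum f a) :
    HasSum (fun n ↦ ∑ p ∈ antidiagonal n, f p) a := by
  have hσ := HasAntidiagonal.sigmaAntidiagonalEquivProd.hasSum_iff.mpr hf
  exact hσ.sigma fun n ↦ (antidiagonal n).hasSum f

variable {q : ℂ}

section Algebra

lemma qPoch_zero (a q : ℂ) : qPoch a q 0 = 1 := prod_range_zero _

lemma qPoch_succ (a q : ℂ) (n : ℕ) : qPoch a q (n + 1) = qPoch a q n * (1 - a * q ^ n) :=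
  prod_range_succ _ n

lemma qPoch_ne_zero {a : ℂ} (ha : ∀ m : ℕ, a ≠ q ^ (-(m : ℤ))) (n : ℕ) : qPoch a q n ≠ 0 := by
  refine prod_ne_zero_iff.mpr fun k _ hk ↦ ha k ?_
  rw [zpow_neg, zpow_natCast]
  exact eq_inv_of_mul_eq_one_left (sub_eq_zero.mp hk).symm

lemma qPoch_neg_div_mul_pow (x : ℂ) {z : ℂ} (hz : z ≠ 0) (n : ℕ) :
    qPoch (-x / z) q n * z ^ n = ∏ k ∈ range n, (z + x * q ^ k) := by
  rw [qPoch, pow_eq_prod_const, ← prod_mul_distrib]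
  refine prod_congr rfl fun k _ ↦ ?_
  field_simp
  ring

lemma one_sub_pow_succ_ne_zero (hq : ¬IsOfFinOrder q) (n : ℕ) : 1 - q ^ (n + 1) ≠ 0 :=
  fun h ↦ hq (isOfFinOrder_iff_pow_eq_one.mpr ⟨n + 1, n.succ_pos, (sub_eq_zero.mp h).symm⟩)

lemma one_sub_pow_succ_div_qPoch (hq : ¬IsOfFinOrder q) (n : ℕ) :
    (1 - q ^ (n + 1)) / qPoch q q (n + 1) = 1 / qPoch q q n := by
  rw [qPoch_succ, ← pow_succ', mul_comm (qPoch q q n),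
    div_mul_cancel_left₀ (one_sub_pow_succ_ne_zero hq n), one_div]

lemma sum_antidiagonal_one_sub_pow_fst (hq : ¬IsOfFinOrder q) (f : ℕ × ℕ → ℂ) (n : ℕ) :
    ∑ p ∈ antidiagonal (n + 1), (1 - q ^ p.1) / qPoch q q p.1 * f p =
      ∑ p ∈ antidiagonal n, 1 / qPoch q q p.1 * f (p.1 + 1, p.2) := by
  simp [Nat.sum_antidiagonal_succ, one_sub_pow_succ_div_qPoch hq]

lemma sum_antidiagonal_one_sub_pow_snd (hq : ¬IsOfFinOrder q) (f : ℕ × ℕ → ℂ) (n : ℕ) :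
    ∑ p ∈ antidiagonal (n + 1), (1 - q ^ p.2) / qPoch q q p.2 * f p =
      ∑ p ∈ antidiagonal n, 1 / qPoch q q p.2 * f (p.1, p.2 + 1) := by
  simp [Nat.sum_antidiagonal_succ', one_sub_pow_succ_div_qPoch hq]

theorem prod_add_mul_pow_div_qPoch (hq : ¬IsOfFinOrder q) (x y : ℂ) (n : ℕ) :
    (∏ k ∈ range n, (y + x * q ^ k)) / qPoch q q n =
      ∑ p ∈ antidiagonal n,
        q ^ p.1.choose 2 * x ^ p.1 * y ^ p.2 / (qPoch q q p.1 * qPoch q q p.2) := by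
  induction n with
  | zero => simp [qPoch_zero]
  | succ n ih =>
    apply mul_left_cancel₀ (one_sub_pow_succ_ne_zero hq n)
    let f (p : ℕ × ℕ) : ℂ := q ^ p.1.choose 2 * x ^ p.1 * y ^ p.2
    have hsplit : ∀ p ∈ antidiagonal (n + 1),
        (1 - q ^ (n + 1)) * (f p / (qPoch q q p.1 * qPoch q q p.2)) =
          (1 - q ^ p.2) / qPoch q q p.2 * (f p / qPoch q q p.1) +
          (1 - q ^ p.1) / qPoch q q p.1 * (q ^ p.2 * f p / qPoch q q p.2) := by
      intro p hp
      rw [← mem_antidiagonal.mp hp]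
      ring
    calc (1 - q ^ (n + 1)) * ((∏ k ∈ range (n + 1), (y + x * q ^ k)) / qPoch q q (n + 1))
      _ = (1 - q ^ (n + 1)) / qPoch q q (n + 1) *
            ((∏ k ∈ range n, (y + x * q ^ k)) * (y + x * q ^ n)) := by
        rw [prod_range_succ]
        ring
      _ = (∑ p ∈ antidiagonal n, f p / (qPoch q q p.1 * qPoch q q p.2)) * (y + x * q ^ n) := by
        rw [one_sub_pow_succ_div_qPoch hq, ← ih]
        ring
      _ = ∑ p ∈ antidiagonal n, (1 / qPoch q q p.2 * (f (p.1, p.2 + 1) / qPoch q q p.1) +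
            1 / qPoch q q p.1 * (q ^ p.2 * f (p.1 + 1, p.2) / qPoch q q p.2)) := by
        rw [sum_mul]
        refine sum_congr rfl fun p hp ↦ ?_
        simp only [f, choose_two_succ, ← mem_antidiagonal.mp hp]
        ring
      _ = (1 - q ^ (n + 1)) *
            ∑ p ∈ antidiagonal (n + 1), f p / (qPoch q q p.1 * qPoch q q p.2) := by
        rw [mul_sum, sum_congr rfl hsplit, sum_add_distrib, sum_add_distrib,
          sum_antidiagonal_one_sub_pow_fst hq (fun p ↦ q ^ p.2 * f p / qPoch q q p.2),
          sum_antidiagonal_one_sub_pow_snd hq (fun p ↦ f p / qPoch q q p.1)]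

/-- The homogeneous Rogers–Szegő polynomial `∑ y^a w^b / ((q;q)_a (q;q)_b)` over `a + b = n`,
normalised by dividing by `(q;q)_n`; its value at `w = -y` is Gauss's alternating sum. -/
noncomputable def rogersSzego (q y w : ℂ) (n : ℕ) : ℂ :=
  ∑ p ∈ antidiagonal n, y ^ p.1 * w ^ p.2 / (qPoch q q p.1 * qPoch q q p.2)

lemma rogersSzego_zero (q y w : ℂ) : rogersSzego q y w 0 = 1 := by
  simp [rogersSzego, qPoch_zero]

lemma rogersSzego_one (q y w : ℂ) : rogersSzego q y w 1 = (y + w) / (1 - q) := by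
  simp only [rogersSzego, qPoch, Nat.sum_antidiagonal_succ, HasAntidiagonal.antidiagonal_zero,
    sum_singleton, range_zero, range_one, prod_empty, prod_singleton, zero_add]
  ring

theorem rogersSzego_add_two (hq : ¬IsOfFinOrder q) (y w : ℂ) (n : ℕ) :
    (1 - q ^ (n + 2)) * rogersSzego q y w (n + 2) =
      (y + w) * rogersSzego q y w (n + 1) - y * w * rogersSzego q y w n := by
  let f (p : ℕ × ℕ) : ℂ := y ^ p.1 * w ^ p.2
  have hsplit : ∀ p ∈ antidiagonal (n + 2),
      (1 - q ^ (n + 2)) * (f p / (qPoch q q p.1 * qPoch q q p.2)) =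
        (1 - q ^ p.1) / qPoch q q p.1 * (f p / qPoch q q p.2) +
        (1 - q ^ p.2) / qPoch q q p.2 * (f p / qPoch q q p.1) -
        (1 - q ^ p.1) / qPoch q q p.1 * ((1 - q ^ p.2) / qPoch q q p.2 * f p) := by
    intro p hp
    rw [← mem_antidiagonal.mp hp]
    ring
  have hfst : ∑ p ∈ antidiagonal (n + 2), (1 - q ^ p.1) / qPoch q q p.1 * (f p / qPoch q q p.2) =
      y * rogersSzego q y w (n + 1) := by
    rw [sum_antidiagonal_one_sub_pow_fst hq (fun p ↦ f p / qPoch q q p.2), rogersSzego, mul_sum]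
    exact sum_congr rfl fun p _ ↦ by ring
  have hsnd : ∑ p ∈ antidiagonal (n + 2), (1 - q ^ p.2) / qPoch q q p.2 * (f p / qPoch q q p.1) =
      w * rogersSzego q y w (n + 1) := by
    rw [sum_antidiagonal_one_sub_pow_snd hq (fun p ↦ f p / qPoch q q p.1), rogersSzego, mul_sum]
    exact sum_congr rfl fun p _ ↦ by ring
  have hboth : ∑ p ∈ antidiagonal (n + 2),
      (1 - q ^ p.1) / qPoch q q p.1 * ((1 - q ^ p.2) / qPoch q q p.2 * f p) =
      y * w * rogersSzego q y w n := by
    rw [sum_antidiagonal_one_sub_pow_fst hq (fun p ↦ (1 - q ^ p.2) / qPoch q q p.2 * f p)]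
    simp only [mul_left_comm (1 / qPoch q q _)]
    rw [sum_antidiagonal_one_sub_pow_snd hq (fun p ↦ 1 / qPoch q q p.1 * f (p.1 + 1, p.2)),
      rogersSzego, mul_sum]
    exact sum_congr rfl fun p _ ↦ by ring
  rw [rogersSzego, mul_sum, sum_congr rfl hsplit, sum_sub_distrib, sum_add_distrib,
    hfst, hsnd, hboth]
  ring

lemma rogersSzego_neg_add_two (hq : ¬IsOfFinOrder q) (y : ℂ) (n : ℕ) :
    (1 - q ^ (n + 2)) * rogersSzego q y (-y) (n + 2) = y ^ 2 * rogersSzego q y (-y) n := by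
  rw [rogersSzego_add_two hq]
  ring

theorem rogersSzego_neg_odd (hq : ¬IsOfFinOrder q) (y : ℂ) (k : ℕ) :
    rogersSzego q y (-y) (2 * k + 1) = 0 := by
  induction k with
  | zero => simp [rogersSzego_one]
  | succ k ih =>
    apply mul_left_cancel₀ (one_sub_pow_succ_ne_zero hq (2 * k + 2))
    rw [mul_zero, mul_add_one, add_right_comm, rogersSzego_neg_add_two hq, ih, mul_zero]

theorem rogersSzego_neg_even (hq : ¬IsOfFinOrder q) (y : ℂ) (k : ℕ) :
    rogersSzego q y (-y) (2 * k) = y ^ (2 * k) / qPoch (q ^ 2) (q ^ 2) k := by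
  induction k with
  | zero => simp [rogersSzego_zero, qPoch_zero]
  | succ k ih =>
    have hne := one_sub_pow_succ_ne_zero hq (2 * k + 1)
    have hfactor : 1 - q ^ 2 * (q ^ 2) ^ k = 1 - q ^ (2 * k + 2) := by ring
    apply mul_left_cancel₀ hne
    rw [mul_add_one, rogersSzego_neg_add_two hq, ih, qPoch_succ, hfactor]
    field_simp
    ring

end Algebra

section Analysis

lemma not_isOfFinOrder_of_norm_lt_one (hq : ‖q‖ < 1) : ¬IsOfFinOrder q :=
  fun h ↦ hq.ne h.norm_eq_one

lemma multipliable_one_sub_mul_pow (hq : ‖q‖ < 1) (a : ℂ) :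
    Multipliable fun k : ℕ ↦ 1 - a * q ^ k := by
  have hsum : Summable fun k : ℕ ↦ ‖-(a * q ^ k)‖ := by
    simpa only [norm_neg, norm_mul, norm_pow] using
      (summable_geometric_of_lt_one (norm_nonneg q) hq).mul_left ‖a‖
  simpa only [sub_eq_add_neg] using multipliable_one_add_of_summable hsum

lemma qPoch_mul_qPochInf (hq : ‖q‖ < 1) (a : ℂ) (n : ℕ) :
    qPoch a q n * qPochInf (a * q ^ n) q = qPochInf a q := by
  have hshift (k : ℕ) : 1 - a * q ^ n * q ^ k = 1 - a * q ^ (k + n) := by ring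
  have htail := multipliable_one_sub_mul_pow hq (a * q ^ n)
  simp only [qPoch, qPochInf, hshift] at htail ⊢
  exact htail.prod_mul_tprod_nat_mul' (f := fun k ↦ 1 - a * q ^ k)

/-- The `n`-th term of Euler's `q`-exponential series `∑ q^(n choose 2) w^n / (q;q)_n`. -/
noncomputable def qExpTerm (q w : ℂ) (n : ℕ) : ℂ := q ^ n.choose 2 * w ^ n / qPoch q q n

/-- Euler's `q`-exponential `E_q(w) = ∑ q^(n choose 2) w^n / (q;q)_n`. -/
noncomputable def qExp (q w : ℂ) : ℂ := ∑' n, qExpTerm q w n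

lemma qExpTerm_zero (q w : ℂ) : qExpTerm q w 0 = 1 := by
  simp [qExpTerm, qPoch_zero]

lemma qExpTerm_mul_left (q a w : ℂ) (n : ℕ) : qExpTerm q (a * w) n = a ^ n * qExpTerm q w n := by
  rw [qExpTerm, qExpTerm]
  ring

lemma qExpTerm_succ (hq : ¬IsOfFinOrder q) (w : ℂ) (n : ℕ) :
    (1 - q ^ (n + 1)) * qExpTerm q w (n + 1) = w * q ^ n * qExpTerm q w n := by
  calc (1 - q ^ (n + 1)) * qExpTerm q w (n + 1)
    _ = (1 - q ^ (n + 1)) / qPoch q q (n + 1) * (q ^ (n + 1).choose 2 * w ^ (n + 1)) := by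
      rw [qExpTerm]
      ring
    _ = w * q ^ n * qExpTerm q w n := by
      rw [one_sub_pow_succ_div_qPoch hq, choose_two_succ, qExpTerm]
      ring

lemma summable_norm_qExpTerm (hq : ‖q‖ < 1) (w : ℂ) : Summable fun n ↦ ‖qExpTerm q w n‖ := by
  have hfin := not_isOfFinOrder_of_norm_lt_one hq
  have hratio : Tendsto (fun n : ℕ ↦ ‖w * q ^ n / (1 - q ^ (n + 1))‖) atTop (𝓝 0) := by
    have hpow := tendsto_pow_atTop_nhds_zero_of_norm_lt_one hq
    have hpow_succ := (tendsto_add_atTop_iff_nat 1).mpr hpow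
    simpa using ((hpow.const_mul w).div (hpow_succ.const_sub 1) (by simp)).norm
  refine summable_of_ratio_norm_eventually_le (r := 1 / 2) (by norm_num) ?_
  filter_upwards [hratio.eventually_le_const one_half_pos] with n hn
  have hsucc : qExpTerm q w (n + 1) = w * q ^ n / (1 - q ^ (n + 1)) * qExpTerm q w n := by
    rw [div_mul_eq_mul_div, eq_div_iff (one_sub_pow_succ_ne_zero hfin n), mul_comm,
      qExpTerm_succ hfin]
  rw [norm_norm, norm_norm, hsucc, norm_mul]
  gcongr

lemma qExp_zero (q : ℂ) : qExp q 0 = 1 := by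
  rw [qExp, tsum_eq_single 0 fun n hn ↦ by simp [qExpTerm, hn], qExpTerm_zero]

lemma qExp_eq_one_add_mul (hq : ‖q‖ < 1) (w : ℂ) : qExp q w = (1 + w) * qExp q (q * w) := by
  have hw := (summable_norm_qExpTerm hq w).of_norm
  have hqw := (summable_norm_qExpTerm hq (q * w)).of_norm
  have hdiff : qExp q w - qExp q (q * w) = w * qExp q (q * w) := by
    rw [qExp, qExp, ← hw.tsum_sub hqw, (hw.sub hqw).tsum_eq_zero_add, ← tsum_mul_left,
      qExpTerm_zero, qExpTerm_zero, sub_self, zero_add]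
    refine tsum_congr fun n ↦ ?_
    rw [qExpTerm_mul_left, qExpTerm_mul_left]
    linear_combination qExpTerm_succ (not_isOfFinOrder_of_norm_lt_one hq) w n
  linear_combination hdiff

lemma qExp_neg_eq_qPoch_mul (hq : ‖q‖ < 1) (a : ℂ) (n : ℕ) :
    qExp q (-a) = qPoch a q n * qExp q (q ^ n * -a) := by
  induction n with
  | zero => simp [qPoch_zero]
  | succ n ih =>
    rw [ih, qExp_eq_one_add_mul hq (q ^ n * -a), qPoch_succ, ← mul_assoc q, ← pow_succ']
    ring

lemma tendsto_qExp_pow_mul (hq : ‖q‖ < 1) (w : ℂ) :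
    Tendsto (fun n : ℕ ↦ qExp q (q ^ n * w)) atTop (𝓝 1) := by
  rw [← qExp_zero q]
  refine tendsto_tsum_of_dominated_convergence (summable_norm_qExpTerm hq w) (fun k ↦ ?_)
    (.of_forall fun n k ↦ ?_)
  · have hpow := (tendsto_pow_atTop_nhds_zero_of_norm_lt_one hq).mul_const w
    rw [zero_mul] at hpow
    exact ((hpow.pow k).const_mul _).div_const _
  · rw [qExpTerm_mul_left, norm_mul, norm_pow, norm_pow]
    exact mul_le_of_le_one_left (norm_nonneg _)
      (pow_le_one₀ (by positivity) (pow_le_one₀ (norm_nonneg q) hq.le))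

theorem qPochInf_eq_qExp_neg (hq : ‖q‖ < 1) (a : ℂ) : qPochInf a q = qExp q (-a) := by
  have hprod : Tendsto (qPoch a q) atTop (𝓝 (qPochInf a q)) :=
    (multipliable_one_sub_mul_pow hq a).tendsto_prod_tprod_nat
  have hlim := hprod.mul (tendsto_qExp_pow_mul hq (-a))
  simp only [← qExp_neg_eq_qPoch_mul hq, mul_one] at hlim
  exact tendsto_nhds_unique hlim tendsto_const_nhds

end Analysis

section TripleSeries

/-- The term of the triple series, at `(j, a, b)`, whose two orders of summation give the two
sides of the transformation. -/
noncomputable def tripleTerm (q x y w : ℂ) (p : ℕ × ℕ × ℕ) : ℂ :=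
  q ^ (p.1.choose 2 + (p.1 + p.2.1 + p.2.2).choose 2) * x ^ p.1 * y ^ p.2.1 * w ^ p.2.2 /
    (qPoch q q p.1 * qPoch q q p.2.1 * qPoch q q p.2.2)

lemma summable_tripleTerm (hq : ‖q‖ < 1) (x y w : ℂ) : Summable (tripleTerm q x y w) := by
  have hdom := (summable_norm_qExpTerm hq x).mul_norm
    ((summable_norm_qExpTerm hq y).mul_norm (summable_norm_qExpTerm hq w))
  refine Summable.of_norm_bounded hdom fun ⟨j, a, b⟩ ↦ ?_
  have hfactor : tripleTerm q x y w (j, a, b) =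
      qExpTerm q x j * (qExpTerm q y a * qExpTerm q w b) *
        q ^ (j.choose 2 + j * a + (j + a) * b) := by
    simp only [tripleTerm, qExpTerm, choose_two_add]
    ring
  rw [hfactor, norm_mul, norm_pow]
  exact mul_le_of_le_one_right (norm_nonneg _) (pow_le_one₀ (norm_nonneg _) hq.le)

lemma tsum_tripleTerm_eq_tsum_rogersSzego (hq : ‖q‖ < 1) (x y w : ℂ) :
    ∑' p, tripleTerm q x y w p =
      ∑' j, ∑' N, q ^ (j.choose 2 + (j + N).choose 2) * x ^ j / qPoch q q j *
        rogersSzego q y w N := by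
  have hs := summable_tripleTerm hq x y w
  rw [hs.tsum_prod]
  refine tsum_congr fun j ↦ ?_
  rw [← (hasSum_sum_antidiagonal (hs.prod_factor j).hasSum).tsum_eq]
  refine tsum_congr fun N ↦ ?_
  rw [rogersSzego, mul_sum]
  refine sum_congr rfl fun p hp ↦ ?_
  rw [tripleTerm, ← mem_antidiagonal.mp hp, add_assoc]
  ring

lemma tsum_tripleTerm_eq_tsum_qExp (hq : ‖q‖ < 1) (x y w : ℂ) :
    ∑' p, tripleTerm q x y w p =
      ∑' n : ℕ, q ^ n.choose 2 * ((∏ k ∈ range n, (y + x * q ^ k)) / qPoch q q n) *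
        qExp q (q ^ n * w) := by
  have hs : Summable fun p : (ℕ × ℕ) × ℕ ↦ tripleTerm q x y w (p.1.1, p.1.2, p.2) :=
    (Equiv.prodAssoc ℕ ℕ ℕ).summable_iff.mpr (summable_tripleTerm hq x y w)
  rw [← (Equiv.prodAssoc ℕ ℕ ℕ).tsum_eq]
  simp only [Equiv.prodAssoc_apply]
  rw [hs.tsum_prod, ← (hasSum_sum_antidiagonal hs.prod.hasSum).tsum_eq]
  refine tsum_congr fun n ↦ ?_
  rw [prod_add_mul_pow_div_qPoch (not_isOfFinOrder_of_norm_lt_one hq), mul_sum, sum_mul]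
  refine sum_congr rfl fun p hp ↦ ?_
  rw [← mem_antidiagonal.mp hp, qExp, ← tsum_mul_left]
  refine tsum_congr fun b ↦ ?_
  rw [tripleTerm, qExpTerm, choose_two_add (p.1 + p.2)]
  ring

theorem tsum_prod_mul_qPochInf (hq : ‖q‖ < 1) (x y w : ℂ) :
    ∑' n : ℕ, q ^ n.choose 2 * ((∏ k ∈ range n, (y + x * q ^ k)) / qPoch q q n) *
        qPochInf (w * q ^ n) q =
      ∑' j, ∑' N, q ^ (j.choose 2 + (j + N).choose 2) * x ^ j / qPoch q q j *
        rogersSzego q y (-w) N := by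
  rw [← tsum_tripleTerm_eq_tsum_rogersSzego hq, tsum_tripleTerm_eq_tsum_qExp hq]
  refine tsum_congr fun n ↦ ?_
  rw [qPochInf_eq_qExp_neg hq, mul_comm w, mul_neg]

theorem tsum_prod_mul_qPochInf_self (hq : ‖q‖ < 1) (x z : ℂ) :
    ∑' n : ℕ, q ^ n.choose 2 * ((∏ k ∈ range n, (z + x * q ^ k)) / qPoch q q n) *
        qPochInf (z * q ^ n) q =
      ∑' j, ∑' k, q ^ (j.choose 2 + (j + 2 * k).choose 2) * x ^ j * z ^ (2 * k) /
        (qPoch q q j * qPoch (q ^ 2) (q ^ 2) k) := by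
  have hfin := not_isOfFinOrder_of_norm_lt_one hq
  rw [tsum_prod_mul_qPochInf hq]
  refine tsum_congr fun j ↦ ?_
  rw [← (mul_right_injective₀ (two_ne_zero' ℕ)).tsum_eq]
  · refine tsum_congr fun k ↦ ?_
    rw [rogersSzego_neg_even hfin]
    ring
  · refine Function.support_subset_iff'.mpr fun N hN ↦ ?_
    obtain ⟨k, rfl⟩ : Odd N := by
      rw [← Nat.not_even_iff_odd, even_iff_exists_two_mul]
      exact fun ⟨k, hk⟩ ↦ hN ⟨k, hk.symm⟩
    rw [rogersSzego_neg_odd hfin, mul_zero]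

end TripleSeries

theorem stmt17 (q : ℂ) (hq0 : 0 < ‖q‖) (hq1 : ‖q‖ < 1)
    (x z : ℂ) (hz0 : z ≠ 0) (hz : ∀ m : ℕ, z ≠ q ^ (-(m : ℤ)))
    (h1 : Summable (fun n : ℕ => ‖qPoch (-x / z) q n * q ^ (n * (n - 1) / 2) *
      z ^ n / (qPoch q q n * qPoch z q n)‖))
    (h2 : Summable (fun jk : ℕ × ℕ =>
      ‖q ^ ((jk.1 : ℤ) ^ 2 + 2 * (jk.1 : ℤ) * (jk.2 : ℤ) + 2 * (jk.2 : ℤ) ^ 2 -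
          (jk.1 : ℤ) - (jk.2 : ℤ)) * x ^ jk.1 * z ^ (2 * jk.2) /
        (qPoch q q jk.1 * qPoch (q ^ 2) (q ^ 2) jk.2)‖)) :
    qPochInf z q * ∑' n : ℕ, qPoch (-x / z) q n * q ^ (n * (n - 1) / 2) *
      z ^ n / (qPoch q q n * qPoch z q n)
    = ∑' jk : ℕ × ℕ,
      q ^ ((jk.1 : ℤ) ^ 2 + 2 * (jk.1 : ℤ) * (jk.2 : ℤ) + 2 * (jk.2 : ℤ) ^ 2 -
          (jk.1 : ℤ) - (jk.2 : ℤ)) * x ^ jk.1 * z ^ (2 * jk.2) /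
        (qPoch q q jk.1 * qPoch (q ^ 2) (q ^ 2) jk.2) := by
  rw [h2.of_norm.tsum_prod]
  simp only [← cast_choose_two_add_choose_two, zpow_natCast]
  rw [← tsum_prod_mul_qPochInf_self hq1, ← tsum_mul_left]
  refine tsum_congr fun n ↦ ?_
  have hzn : qPoch z q n ≠ 0 := qPoch_ne_zero hz n
  rw [← qPoch_mul_qPochInf hq1 z n, ← qPoch_neg_div_mul_pow x hz0, ← Nat.choose_two_right]
  field_simp
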